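/- Let k be a perfect field. If A and B are two finite-dimensional division k-algebras, then the tensor product A ⊗_k B is a semisimple ring. -/

import Mathlib

/-!
The Jacobson radical `J` of the Artinian ring `A ⊗ B` is a nilpotent two-sided ideal, and
`A ⊗ B` is semisimple as soon as `J = 0`.

Let `D` be a division algebra. A nonzero two-sided ideal of `D ⊗ C` contains a nonzero element of
`Z(D) ⊗ C` (`exists_mem_center_tensor`): among the nonzero elements of the ideal, written in
coordinates with respect to a `k`-basis of `C`, take one with the fewest nonzero coordinates, scaled
so that one of them is `1`; its commutator with any `d ⊗ 1` has strictly fewer nonzero coordinates,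
so it vanishes, which says that all coordinates are central. If `J ≠ 0`, applying this first to `A`
and then to `B` produces a nonzero element of `J` coming from `Z(A) ⊗ Z(B)`, and it is nilpotent.
But `Z(A)` and `Z(B)` are finite extensions of the perfect field `k`, hence separable, so
`Z(A) ⊗ Z(B)` is reduced (`isReduced_tensor_of_perfectField`), a contradiction.
-/

namespace ARSurvey

open scoped TensorProduct

/-- The inclusion `Z(D) ⊗ C → D ⊗ C`. -/
noncomputable def centerIncl (k D C : Type*) [Field k] [Ring D] [Ring C]
    [Algebra k D] [Algebra k C] :
    (Subalgebra.center k D) ⊗[k] C →ₐ[k] D ⊗[k] C :=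
  Algebra.TensorProduct.map (Subalgebra.center k D).val (AlgHom.id k C)

lemma centerIncl_injective (k D C : Type*) [Field k] [Ring D] [Ring C]
    [Algebra k D] [Algebra k C] : Function.Injective (centerIncl k D C) :=
  Module.Flat.rTensor_preserves_injective_linearMap (M := C)
    (Subalgebra.center k D).val.toLinearMap Subtype.val_injective

lemma basis_repr_mul_tmul_one {k D C ι : Type*} [Field k] [Ring D] [Ring C]
    [Algebra k D] [Algebra k C] (b : Module.Basis ι k C) (x : D ⊗[k] C) (d : D) (i : ι) :
    (Algebra.TensorProduct.basis D b).repr (x * (d ⊗ₜ 1)) i =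
      (Algebra.TensorProduct.basis D b).repr x i * d := by
  induction x with
  | zero => simp
  | tmul a c =>
    simp [Algebra.TensorProduct.basis_repr_tmul, mul_assoc, Algebra.commutes]
  | add x y hx hy => simp [add_mul, hx, hy]

lemma mem_range_centerIncl {k D C ι : Type*} [Field k] [Ring D] [Ring C]
    [Algebra k D] [Algebra k C] (b : Module.Basis ι k C) (x : D ⊗[k] C)
    (hx : ∀ i, (Algebra.TensorProduct.basis D b).repr x i ∈ Subalgebra.center k D) :
    ∃ z, centerIncl k D C z = x := by
  change x ∈ (centerIncl k D C).range
  rw [← (Algebra.TensorProduct.basis D b).linearCombination_repr x,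
    Finsupp.linearCombination_apply]
  refine Subalgebra.sum_mem _ fun i _ => ⟨⟨_, hx i⟩ ⊗ₜ b i, ?_⟩
  simp [centerIncl, TensorProduct.smul_tmul']

lemma exists_mem_center_tensor {k D C : Type*} [Field k] [DivisionRing D] [Ring C]
    [Algebra k D] [Algebra k C] (I : Ideal (D ⊗[k] C)) [I.IsTwoSided] (hI : I ≠ ⊥) :
    ∃ z, z ≠ 0 ∧ centerIncl k D C z ∈ I := by
  classical
  let b := Module.Free.chooseBasis k C
  let β := Algebra.TensorProduct.basis D b
  have hex : ∃ n, ∃ x ∈ I, x ≠ 0 ∧ (β.repr x).support.card = n := by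
    obtain ⟨x, hx, h0⟩ := Submodule.exists_mem_ne_zero_of_ne_bot hI
    exact ⟨_, x, hx, h0, rfl⟩
  obtain ⟨x, hx, h0, hn⟩ := Nat.find_spec hex
  have hmin : ∀ y ∈ I, (β.repr y).support.card < (β.repr x).support.card → y = 0 := by
    intro y hy hlt
    by_contra hy0
    exact Nat.find_min hex (hn ▸ hlt) ⟨y, hy, hy0, rfl⟩
  obtain ⟨j, hj⟩ : ∃ j, β.repr x j ≠ 0 := by
    by_contra! h
    exact h0 (β.repr.map_eq_zero_iff.mp (Finsupp.ext h))
  have hsmul : ∀ (d : D) (y : D ⊗[k] C), (d ⊗ₜ 1) * y = d • y := fun d y => by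
    induction y with
    | zero => simp
    | tmul a c => simp [TensorProduct.smul_tmul']
    | add y z hy hz => simp [mul_add, hy, hz]
  let c := β.repr x j
  let y := c⁻¹ • x
  have hyI : y ∈ I := by
    rw [show y = (c⁻¹ ⊗ₜ 1) * x from (hsmul _ _).symm]
    exact I.mul_mem_left _ hx
  have hyr : ∀ i, β.repr y i = c⁻¹ * β.repr x i := fun i => by simp [y]
  have hcomm : ∀ d : D, d • y - y * (d ⊗ₜ 1) = 0 := by
    intro d
    have hr : ∀ i, β.repr (d • y - y * (d ⊗ₜ 1)) i = d * β.repr y i - β.repr y i * d := by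
      intro i
      rw [map_sub, Finsupp.sub_apply, basis_repr_mul_tmul_one, map_smul]
      rfl
    apply hmin
    · rw [← hsmul]
      exact I.sub_mem (I.mul_mem_left _ hyI) (I.mul_mem_right _ hyI)
    · apply Finset.card_lt_card
      rw [Finset.ssubset_iff_of_subset]
      -- the `j`-th coordinate of `y` is `1`, so it drops out of the commutator
      · refine ⟨j, by simpa using hj, ?_⟩
        rw [Finsupp.notMem_support_iff, hr, hyr, inv_mul_cancel₀ hj]
        simp
      · intro i hi
        rw [Finsupp.mem_support_iff, hr, hyr] at hi
        rw [Finsupp.mem_support_iff]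
        intro h
        simp [h] at hi
  obtain ⟨z, hz⟩ := mem_range_centerIncl b y fun i => by
    rw [Subalgebra.mem_center_iff]
    intro d
    have h := congrArg (fun t => β.repr t i) (hcomm d)
    simp only [map_sub, Finsupp.sub_apply, map_smul, map_zero, Finsupp.coe_zero,
      Pi.zero_apply] at h
    rw [basis_repr_mul_tmul_one] at h
    exact sub_eq_zero.mp h
  refine ⟨z, ?_, hz ▸ hyI⟩
  rintro rfl
  rw [map_zero] at hz
  exact smul_ne_zero (inv_ne_zero hj) h0 hz.symm

lemma isReduced_tensor_of_perfectField (k K L : Type*) [Field k] [PerfectField k]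
    [CommRing K] [IsDomain K] [CommRing L] [IsDomain L] [Algebra k K] [Algebra k L]
    [FiniteDimensional k K] [FiniteDimensional k L] : IsReduced (K ⊗[k] L) := by
  let _ : Field K := (isField_of_isIntegral_of_isField' (R := k) (Field.toIsField k)).toField
  let _ : Field L := (isField_of_isIntegral_of_isField' (R := k) (Field.toIsField k)).toField
  have : Algebra.FormallyUnramified k L := Algebra.FormallyUnramified.of_isSeparable k L
  exact Algebra.FormallyUnramified.isReduced_of_field K (K ⊗[k] L)

/-- If `k` is a perfect field and `A`, `B` are finite-dimensional division `k`-algebras,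
then `A ⊗_k B` is a semisimple ring. -/
theorem tensorProduct_divisionAlgebras_isSemisimpleRing
    (k : Type) [Field k] [PerfectField k]
    (A B : Type) [DivisionRing A] [DivisionRing B]
    [Algebra k A] [Algebra k B]
    [FiniteDimensional k A] [FiniteDimensional k B] :
    IsSemisimpleRing (A ⊗[k] B) := by
  have : IsArtinianRing (A ⊗[k] B) := IsArtinianRing.of_finite k _
  rw [IsArtinianRing.isSemisimpleRing_iff_jacobson]
  by_contra hJ
  obtain ⟨z, hz0, hz⟩ := exists_mem_center_tensor _ hJ
  let ZA := Subalgebra.center k A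
  let ZB := Subalgebra.center k B
  -- the inclusion of `B ⊗ Z(A)`, with the factors swapped so that the lemma applies to `B`
  let f : B ⊗[k] ZA →ₐ[k] A ⊗[k] B :=
    (centerIncl k A B).comp (Algebra.TensorProduct.comm k B ZA).toAlgHom
  have hf : Function.Injective f :=
    (centerIncl_injective k A B).comp (Algebra.TensorProduct.comm k B ZA).injective
  let I : Ideal (B ⊗[k] ZA) := (Ring.jacobson (A ⊗[k] B)).comap f
  have hI : I ≠ ⊥ := by
    refine (Submodule.ne_bot_iff _).mpr ⟨(Algebra.TensorProduct.comm k B ZA).symm z, ?_, ?_⟩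
    · simpa [I, f, Ideal.mem_comap] using hz
    · simpa using hz0
  obtain ⟨w, hw0, hw⟩ := exists_mem_center_tensor I hI
  have hred : IsReduced (ZB ⊗[k] ZA) := isReduced_tensor_of_perfectField k ZB ZA
  obtain ⟨n, hn⟩ := IsSemiprimaryRing.isNilpotent (R := A ⊗[k] B)
  refine hw0 (hred.eq_zero w ⟨n, hf.comp (centerIncl_injective k B ZA) ?_⟩)
  have h := Ideal.pow_mem_pow (Ideal.mem_comap.mp hw) n
  rw [hn] at h
  simpa using h

end ARSurvey
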